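/- Let n ≥ 3 and let 𝒜 = {[A₁],…,[A_r]} be a malnormal subgroup system of F_n, with L, Γ_i, 𝒞 and S_k as in the context. Let k ≥ L+2 and let w ∈ S_k. Then there exist w' ∈ S_{k+1}, an index i ∈ {1,…,r}, an element g ∈ F_n and an element a ∈ gA_ig⁻¹ such that w' is a length-one extension of w and a is an extension of w'. -/

import Mathlib

open scoped Classical
open MeasureTheory

noncomputable section

namespace RelCurr

/-- The alphabet `𝔄 = ℬ ∪ ℬ⁻¹`: a letter is a generator together with a sign. -/
abbrev Letter (n : ℕ) := Fin n × Bool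

/-- The inverse of a letter. -/
def linv {n : ℕ} (x : Letter n) : Letter n := (x.1, !x.2)

/-- The free group of rank `n` on the basis `Fin n`. -/
abbrev F (n : ℕ) := FreeGroup (Fin n)

/-- The reduced word of an element of `F n`. -/
def rword {n : ℕ} (g : F n) : List (Letter n) := FreeGroup.toWord g

/-- The length `|g|` of the reduced word of `g`. -/
def wlen {n : ℕ} (g : F n) : ℕ := (rword g).length

/-- The single-letter element of `F n` given by a letter. -/
def letterE {n : ℕ} (b : Letter n) : F n := FreeGroup.mk [b]

/-- The conjugate subgroup `g A g⁻¹`. -/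
def conjSub {n : ℕ} (g : F n) (A : Subgroup (F n)) : Subgroup (F n) :=
  Subgroup.map (MulAut.conj g).toMonoidHom A

/-- A subgroup `A` is malnormal if `xAx⁻¹ ∩ A = {1}` for every `x ∉ A`. -/
def Malnormal {n : ℕ} (A : Subgroup (F n)) : Prop :=
  ∀ x : F n, x ∉ A → conjSub x A ⊓ A = ⊥

/-- The word metric on the Cayley tree `T`. -/
def dist' {n : ℕ} (x y : F n) : ℕ := wlen (x⁻¹ * y)

/-- The cyclically reduced length of `a`. -/
def cycLen {n : ℕ} (a : F n) : ℕ := sInf { m | ∃ h : F n, wlen (h⁻¹ * a * h) = m }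

/-- The vertex set of the minimal `A`-invariant subtree `T_A` of the Cayley tree:
the union of the axes of the nontrivial elements of `A`. -/
def treeVerts {n : ℕ} (A : Subgroup (F n)) : Set (F n) :=
  { h | ∃ a ∈ A, a ≠ 1 ∧ wlen (h⁻¹ * a * h) = cycLen a }

/-- `γ_w ⊆ S`: every prefix of the reduced word of `w` lies in the vertex set `S`. -/
def pathIn {n : ℕ} (w : F n) (S : Set (F n)) : Prop :=
  ∀ m ≤ wlen w, FreeGroup.mk ((rword w).take m) ∈ S

/-- An element is cyclically reduced if the last letter of its reduced word is not the
inverse of the first letter. -/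
def CyclicallyReduced {n : ℕ} (w : F n) : Prop :=
  ∀ x y : Letter n, (rword w).head? = some x → (rword w).getLast? = some y → y ≠ linv x

/-- `v` is a length-one extension of `w`. -/
def LengthOneExt {n : ℕ} (w v : F n) : Prop :=
  ∃ b : Letter n, v = w * letterE b ∧ wlen v = wlen w + 1

/-- `a` is an extension of `w`: the reduced word of `w` is a proper prefix of that of `a`. -/
def ExtensionOf {n : ℕ} (w a : F n) : Prop :=
  rword w <+: rword a ∧ wlen w < wlen a

/-- `g` is a proper power. -/
def IsProperPower {n : ℕ} (g : F n) : Prop := ∃ (h : F n) (k : ℕ), 2 ≤ k ∧ g = h ^ k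

section System

variable {n r : ℕ} (A : Fin r → Subgroup (F n))

/-- `[B] ∈ 𝒜`, i.e. `B` is a conjugate of one of the subgroups of the system. -/
def InSystem (B : Subgroup (F n)) : Prop := ∃ (i : Fin r) (g : F n), B = conjSub g (A i)

/-- The family `A` represents a subgroup system: finite rank subgroups distinct
from `{1}` and `F n`. -/
def IsSystem : Prop := (∀ i, (A i).FG) ∧ (∀ i, A i ≠ ⊥) ∧ (∀ i, A i ≠ ⊤)

/-- The subgroup system is malnormal. -/
def SystemMalnormal : Prop :=
  (∀ i, Malnormal (A i)) ∧
  ∀ B₁ B₂ : Subgroup (F n), InSystem A B₁ → InSystem A B₂ → B₁ ≠ B₂ → B₁ ⊓ B₂ = ⊥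

/-- `g` is `𝒜`-peripheral: trivial or contained in a conjugate of one of the `A i`. -/
def Peripheral (g : F n) : Prop := g = 1 ∨ ∃ B, InSystem A B ∧ g ∈ B

/-- The diameter of the intersection of the trees of two distinct subgroups of the
system is at most `L`. -/
def DiamBound (L : ℕ) : Prop :=
  ∀ B₁ B₂ : Subgroup (F n), InSystem A B₁ → InSystem A B₂ → B₁ ≠ B₂ →
    ∀ x ∈ treeVerts B₁ ∩ treeVerts B₂, ∀ y ∈ treeVerts B₁ ∩ treeVerts B₂, dist' x y ≤ L

/-- `B ∈ Γ_i`: `B` is a conjugate of `A i` whose tree contains the base point `1`. -/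
def GammaMem (i : Fin r) (B : Subgroup (F n)) : Prop :=
  (∃ g : F n, B = conjSub g (A i)) ∧ (1 : F n) ∈ treeVerts B

/-- The finite set `𝒞` of words of length `L+2` whose path is contained in no tree
`T_B` with `B ∈ Γ_i`, for every `i`. -/
def Ccal (L : ℕ) : Set (F n) :=
  { w | wlen w = L + 2 ∧ ∀ (i : Fin r) (B : Subgroup (F n)), GammaMem A i B →
      ¬ pathIn w (treeVerts B) }

/-- `F_n − 𝒜`: the words containing an element of `𝒞` as a contiguous subword. -/
def FmA (L : ℕ) : Set (F n) := { w | ∃ x ∈ Ccal A L, rword x <:+: rword w }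

/-- `S_k`: words of length `k` not containing any element of `𝒞` as a subword. -/
def Sk (L k : ℕ) : Set (F n) := { w | wlen w = k ∧ w ∉ FmA A L }

end System

/-! ### The boundary of `F n` -/

/-- An infinite reduced word. -/
def IsRed {n : ℕ} (ξ : ℕ → Letter n) : Prop := ∀ i, ξ (i + 1) ≠ linv (ξ i)

/-- The Gromov boundary `∂F_n`, realized as the space of infinite reduced words,
topologized as a subspace of the product space. -/
def Boundary (n : ℕ) : Type := { ξ : ℕ → Letter n // IsRed ξ }

instance {n : ℕ} : TopologicalSpace (Boundary n) :=
  instTopologicalSpaceSubtype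

/-- The length-`m` prefix of a boundary point. -/
def bpre {n : ℕ} (ξ : Boundary n) (m : ℕ) : List (Letter n) :=
  (List.range m).map ξ.1

/-- The reduced word of `w` is a prefix of the infinite word `ξ`. -/
def wordPrefixOf {n : ℕ} (w : F n) (ξ : Boundary n) : Prop :=
  bpre ξ (wlen w) = rword w

/-- The boundary (limit set) `∂A ⊆ ∂F_n` of a subgroup `A`. -/
def limitSet {n : ℕ} (A : Subgroup (F n)) : Set (Boundary n) :=
  { ξ | ∀ m : ℕ, ∃ a ∈ A, bpre ξ m <+: rword a }

/-- `ξ = g^{+∞}`: `ξ` is the limit of the reduced words of the powers of `g`. -/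
def IsPosLimit {n : ℕ} (g : F n) (ξ : Boundary n) : Prop :=
  ∀ m : ℕ, ∃ N : ℕ, ∀ k ≥ N, bpre ξ m <+: rword (g ^ k)

/-- The number of letters cancelled when concatenating the word `l` with the
infinite reduced word `ξ`. -/
def cancelLen {n : ℕ} (l : List (Letter n)) (ξ : ℕ → Letter n) : ℕ :=
  sSup { j | j ≤ l.length ∧ ∀ i < j, l.reverse[i]? = some (linv (ξ i)) }

/-- The sequence underlying the action of `g` on a boundary point: left multiplication
followed by cancellation. -/
def actSeq {n : ℕ} (g : F n) (ξ : ℕ → Letter n) : ℕ → Letter n :=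
  fun m =>
    if h : m < (rword g).length - cancelLen (rword g) ξ then
      (rword g).get ⟨m, by omega⟩
    else ξ (m - ((rword g).length - cancelLen (rword g) ξ) + cancelLen (rword g) ξ)

/-- The action of `F n` on its boundary: left multiplication followed by cancellation.
(The sequence `actSeq g ξ.1` is always reduced, so the first branch always applies.) -/
def bAct {n : ℕ} (g : F n) (ξ : Boundary n) : Boundary n :=
  if h : IsRed (actSeq g ξ.1) then ⟨actSeq g ξ.1, h⟩ else ξ

/-! ### The double boundary -/

/-- The diagonal action of `F n` on `Sym2 (∂F_n)`, whose restriction to the set of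
non-diagonal classes is the action on the double boundary `∂²F_n`. -/
def dbAct {n : ℕ} (g : F n) : Sym2 (Boundary n) → Sym2 (Boundary n) := Sym2.map (bAct g)

/-- `∂²𝒜`: the classes `{ξ,η}` with both endpoints in `g·∂A_i = ∂(gA_ig⁻¹)` for some
`i` and `g`. -/
def dblBndA {n r : ℕ} (A : Fin r → Subgroup (F n)) : Set (Sym2 (Boundary n)) :=
  { z | ∃ (i : Fin r) (g : F n) (ξ η : Boundary n), z = s(ξ, η) ∧
      ξ ∈ limitSet (conjSub g (A i)) ∧ η ∈ limitSet (conjSub g (A i)) }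

/-- The double boundary `∂²(F_n,𝒜)` of `F n` relative to `𝒜`, as a subset of
`Sym2 (∂F_n)`: non-diagonal classes not lying in `∂²𝒜`. -/
def relSet {n r : ℕ} (A : Fin r → Subgroup (F n)) : Set (Sym2 (Boundary n)) :=
  { z | ¬ z.IsDiag } \ dblBndA A

/-- The cylinder set `C(γ_w) ⊆ ∂²F_n` of the geodesic path from `1` to `w`. -/
def cylinder {n : ℕ} (w : F n) : Set (Sym2 (Boundary n)) :=
  { z | ∃ ξ η : Boundary n, z = s(ξ, η) ∧ ξ.1 0 ≠ η.1 0 ∧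
      (wordPrefixOf w ξ ∨ wordPrefixOf w η) }

instance {n : ℕ} : MeasurableSpace (Sym2 (Boundary n)) := borel _

/-- The action of `g ∈ F n` on `∂²(F_n,𝒜)`. (The action of `F n` preserves
`∂²(F_n,𝒜)`, so the first branch always applies.) -/
def relAct {n r : ℕ} (A : Fin r → Subgroup (F n)) (g : F n) (z : ↥(relSet A)) :
    ↥(relSet A) :=
  if h : dbAct g z.1 ∈ relSet A then ⟨dbAct g z.1, h⟩ else z

/-- The cylinder `C(γ_w)` as a subset of `∂²(F_n,𝒜)`. -/
def relCyl {n r : ℕ} (A : Fin r → Subgroup (F n)) (w : F n) : Set ↥(relSet A) :=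
  Subtype.val ⁻¹' cylinder w

/-- The translated cylinder `g·C(γ_w)` as a subset of `∂²(F_n,𝒜)`. -/
def relCylG {n r : ℕ} (A : Fin r → Subgroup (F n)) (g w : F n) : Set ↥(relSet A) :=
  Subtype.val ⁻¹' (dbAct g '' cylinder w)

/-- A relative current on `(F_n,𝒜)`: an `F_n`-invariant Radon measure on the
locally compact space `∂²(F_n,𝒜)` (finite on compacts, outer regular, inner regular
on open sets). -/
def IsRelCurrent {n r : ℕ} (A : Fin r → Subgroup (F n)) (μ : Measure ↥(relSet A)) : Prop :=
  (∀ (g : F n) (s : Set ↥(relSet A)), MeasurableSet s → μ (relAct A g ⁻¹' s) = μ s) ∧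
  μ.Regular

/-- The `F_n`-orbit of a point of `Sym2 (∂F_n)`, inside `∂²(F_n,𝒜)`. -/
def orbitOf {n r : ℕ} (A : Fin r → Subgroup (F n)) (z : Sym2 (Boundary n)) :
    Set ↥(relSet A) :=
  { y | ∃ h : F n, (y : Sym2 (Boundary n)) = dbAct h z }

/-!
A vertex `w` of the minimal tree `T_B` lies on the axis of some nontrivial `b ∈ B`. At most one of
the two ends of this axis leaves `w` back along `γ_w`; the other end starts with an edge labelled
`x`, say, so `wx` is a longer reduced word whose vertex is still in `T_B`, and high powers of `b` or
`b⁻¹` start with the word `wx`.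

For `w ∈ S_k`, the last `L + 2` edges of `γ_w` lie in `T_B` for some conjugate `B` of some `A_i`,
because the window they spell is not in `𝒞`. Extending `w` to `wx` inside this `T_B` creates
only one new window of length `L + 2`, the last one, and it again lies in `T_B`.
-/

section Words

variable {α : Type*} {l m p : List (α × Bool)}

theorem isReduced_concat_or_eq_concat (hl : FreeGroup.IsReduced l) (b : α × Bool) :
    FreeGroup.IsReduced (l ++ [b]) ∨ ∃ l', l = l' ++ [(b.1, !b.2)] := by
  rcases List.eq_nil_or_concat l with rfl | ⟨l', y, rfl⟩
  · exact .inl FreeGroup.IsReduced.singleton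
  · rw [List.concat_eq_append] at hl ⊢
    by_cases hy : y = (b.1, !b.2)
    · exact .inr ⟨l', by rw [hy]⟩
    · refine .inl (List.isChain_append.2 ⟨hl, List.isChain_singleton b, ?_⟩)
      simp only [List.getLast?_concat, List.head?_cons, Option.mem_def, Option.some.injEq]
      rintro _ rfl _ rfl h₁
      by_contra h₂
      exact hy (Prod.ext h₁ (Bool.eq_not_of_ne h₂))

theorem isReduced_invRev (hl : FreeGroup.IsReduced l) :
    FreeGroup.IsReduced (FreeGroup.invRev l) := by
  classical
  exact .of_reduce_eq (by rw [FreeGroup.reduce_invRev, hl.reduce_eq])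

theorem isReduced_append_or_append_invRev (hl : FreeGroup.IsReduced l)
    (hm : FreeGroup.IsCyclicallyReduced m) :
    FreeGroup.IsReduced (l ++ m) ∨ FreeGroup.IsReduced (l ++ FreeGroup.invRev m) := by
  have append_of_junction {m' : List (α × Bool)} (hm' : FreeGroup.IsReduced m')
      (h : ∀ y ∈ l.getLast?, ∀ x ∈ m'.head?, y.1 = x.1 → y.2 = x.2) :
      FreeGroup.IsReduced (l ++ m') := List.isChain_append.2 ⟨hl, hm', h⟩
  by_cases h : ∀ y ∈ l.getLast?, ∀ x ∈ m.head?, y.1 = x.1 → y.2 = x.2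
  · exact .inl (append_of_junction hm.isReduced h)
  -- if the last letter of `l` cancels the first letters of both `m` and `m⁻¹`, then it is the last
  -- letter of `m`, which therefore cancels the first one
  push Not at h
  obtain ⟨y, hy, x, hx, hyx₁, hyx₂⟩ := h
  refine .inr (append_of_junction (isReduced_invRev hm.isReduced) ?_)
  rintro y' hy' _ hz hyz
  obtain rfl := Option.mem_unique hy hy'
  rw [FreeGroup.invRev, List.head?_reverse, List.getLast?_map, Option.mem_map] at hz
  obtain ⟨z, hz, rfl⟩ := hz
  have hzx : z.2 = x.2 := hm.2 z hz x hx (hyz.symm.trans hyx₁)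
  rw [hzx]
  exact Bool.eq_not_of_ne hyx₂

variable [DecidableEq α]

theorem prefix_reduce_append (hm : FreeGroup.IsReduced m) (hp : p <+: m)
    (hlen : p.length + l.length ≤ m.length) : p <+: FreeGroup.reduce (m ++ l) := by
  induction l generalizing m with
  | nil => rwa [List.append_nil, hm.reduce_eq]
  | cons b l ih =>
    rw [List.length_cons] at hlen
    rcases isReduced_concat_or_eq_concat hm b with hmb | ⟨m', rfl⟩
    · rw [List.append_cons]
      exact ih hmb (hp.trans (List.prefix_append _ _)) (by rw [List.length_append]; omega)
    · rw [List.length_append, List.length_singleton] at hlen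
      have hcancel : FreeGroup.reduce (m' ++ [(b.1, !b.2)] ++ b :: l) =
          FreeGroup.reduce (m' ++ l) := by
        rw [List.append_assoc]
        exact FreeGroup.reduce.Step.eq FreeGroup.Red.Step.not_rev
      rw [hcancel]
      exact ih (hm.infix (List.prefix_append _ _).isInfix)
        (List.prefix_of_prefix_length_le hp (List.prefix_append _ _) (by omega)) (by omega)

end Words

section ReducedWords

variable {n : ℕ}

theorem isReduced_rword (g : F n) : FreeGroup.IsReduced (rword g) := FreeGroup.isReduced_toWord

theorem mk_rword (g : F n) : FreeGroup.mk (rword g) = g := FreeGroup.mk_toWord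

theorem rword_mk {l : List (Letter n)} (hl : FreeGroup.IsReduced l) :
    rword (FreeGroup.mk l : F n) = l := by
  rw [rword, FreeGroup.toWord_mk, hl.reduce_eq]

theorem rword_mul (g h : F n) : rword (g * h) = FreeGroup.reduce (rword g ++ rword h) :=
  FreeGroup.toWord_mul g h

theorem rword_inv (g : F n) : rword g⁻¹ = FreeGroup.invRev (rword g) := FreeGroup.toWord_inv g

theorem wlen_inv (g : F n) : wlen g⁻¹ = wlen g := FreeGroup.norm_inv_eq

theorem wlen_mk_le (l : List (Letter n)) : wlen (FreeGroup.mk l : F n) ≤ l.length :=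
  FreeGroup.norm_mk_le

theorem rword_mul_letterE {g : F n} {x : Letter n} (h : FreeGroup.IsReduced (rword g ++ [x])) :
    rword (g * letterE x) = rword g ++ [x] := by
  rw [← rword_mk h, ← FreeGroup.mul_mk, mk_rword, letterE]

theorem rword_pow {c : F n} (hc : FreeGroup.IsCyclicallyReduced (rword c)) (k : ℕ) :
    rword (c ^ k) = (List.replicate k (rword c)).flatten :=
  (FreeGroup.toWord_pow c k).trans (hc.flatten_replicate k).isReduced.reduce_eq

theorem rword_pow_add {c : F n} (hc : FreeGroup.IsCyclicallyReduced (rword c)) (j k : ℕ) :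
    rword (c ^ (j + k)) = rword (c ^ j) ++ rword (c ^ k) := by
  simp only [rword_pow hc, List.replicate_add, List.flatten_append]

theorem le_wlen_pow {c : F n} (hc : FreeGroup.IsCyclicallyReduced (rword c)) (hc₁ : c ≠ 1)
    (k : ℕ) : k ≤ wlen (c ^ k) := by
  have hpos : 0 < wlen c := Nat.pos_of_ne_zero (FreeGroup.norm_eq_zero.not.2 hc₁)
  simpa [wlen, rword_pow hc] using Nat.le_mul_of_pos_right k hpos

theorem isReduced_append_rword_pow {c w : F n} (hc : FreeGroup.IsCyclicallyReduced (rword c))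
    (hr : FreeGroup.IsReduced (rword w ++ rword c)) (k : ℕ) :
    FreeGroup.IsReduced (rword w ++ rword (c ^ k)) := by
  rw [rword_pow hc]
  rcases eq_or_ne k 0 with rfl | hk
  · simpa using isReduced_rword w
  · simpa only [List.append_nil] using FreeGroup.IsReduced.append_flatten_replicate_append
      (L₃ := []) hc (by rwa [List.append_nil]) hk

theorem prefix_rword_conj_pow {c w : F n} (hc : FreeGroup.IsCyclicallyReduced (rword c))
    (hc₁ : c ≠ 1) (hr : FreeGroup.IsReduced (rword w ++ rword c)) (k : ℕ) :
    rword w ++ rword (c ^ k) <+: rword ((w * c * w⁻¹) ^ (k + wlen w)) := by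
  have hred := isReduced_append_rword_pow hc hr (k + wlen w)
  rw [conj_pow, rword_mul (w * _), rword_mul w, hred.reduce_eq]
  refine prefix_reduce_append hred ?_ ?_
  · rw [rword_pow_add hc, ← List.append_assoc]
    exact List.prefix_append _ _
  · have hinv : (rword w⁻¹).length = wlen w := wlen_inv w
    have hlen : wlen w ≤ (rword (c ^ wlen w)).length := le_wlen_pow hc hc₁ _
    simp only [rword_pow_add hc, List.length_append]
    omega

theorem extensionOf_conj_pow {c w : F n} {x : Letter n} {t : List (Letter n)}
    (hc : FreeGroup.IsCyclicallyReduced (rword c)) (hx : rword c = x :: t)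
    (hr : FreeGroup.IsReduced (rword w ++ rword c)) :
    ExtensionOf (w * letterE x) ((w * c * w⁻¹) ^ (2 + wlen w)) := by
  have hc₁ : c ≠ 1 := by
    rintro rfl
    simp [rword] at hx
  have hwx : rword (w * letterE x) = rword w ++ [x] :=
    rword_mul_letterE (hr.infix ⟨[], t, by simp [hx]⟩)
  have hpre : rword w ++ [x] ++ (t ++ x :: t) <+: rword ((w * c * w⁻¹) ^ (2 + wlen w)) := by
    simpa [rword_pow hc, List.replicate_succ, hx] using prefix_rword_conj_pow hc hc₁ hr 2
  refine ⟨hwx ▸ (List.prefix_append _ _).trans hpre, ?_⟩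
  have hlen := hpre.length_le
  simp only [wlen, hwx, List.length_append, List.length_cons] at hlen ⊢
  omega

end ReducedWords

section ConjugacyClasses

variable {n : ℕ} {c d : F n}

/-- `c` is a shortest element of its conjugacy class; for `c ≠ 1`, equivalently, the axis of `c`
in the Cayley tree passes through `1`, and the axis of `h * c * h⁻¹` through `h`. -/
def IsShortestConj (c : F n) : Prop := ∀ d, IsConj c d → wlen c ≤ wlen d

theorem IsShortestConj.inv (hc : IsShortestConj c) : IsShortestConj c⁻¹ := by
  intro d hd
  rw [wlen_inv, ← wlen_inv d]
  obtain ⟨g, rfl⟩ := isConj_iff.1 hd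
  exact hc _ (isConj_iff.2 ⟨g, by group⟩)

theorem IsShortestConj.of_isConj_of_wlen_le (hc : IsShortestConj c) (hcd : IsConj c d)
    (hle : wlen d ≤ wlen c) : IsShortestConj d :=
  fun e hde => hle.trans (hc e (hcd.trans hde))

theorem IsShortestConj.rotate (hc : IsShortestConj c) {x : Letter n} {t : List (Letter n)}
    (hx : rword c = x :: t) : IsShortestConj ((letterE x)⁻¹ * c * letterE x) := by
  have hrot : (letterE x)⁻¹ * c * letterE x = FreeGroup.mk (t ++ [x]) := by
    rw [← mk_rword c, hx, ← List.singleton_append, ← FreeGroup.mul_mk, ← FreeGroup.mul_mk, letterE,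
      inv_mul_cancel_left]
  refine hc.of_isConj_of_wlen_le (isConj_iff.2 ⟨(letterE x)⁻¹, by rw [inv_inv]⟩) ?_
  calc wlen ((letterE x)⁻¹ * c * letterE x) ≤ (t ++ [x]).length := hrot ▸ wlen_mk_le _
    _ = wlen c := by simp [wlen, hx]

theorem IsShortestConj.isCyclicallyReduced (hc : IsShortestConj c) :
    FreeGroup.IsCyclicallyReduced (rword c) := by
  set q := FreeGroup.reduceCyclically.conjugator (rword c)
  set s := FreeGroup.reduceCyclically (rword c)
  have hqs : q ++ s ++ FreeGroup.invRev q = rword c :=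
    FreeGroup.reduceCyclically.conj_conjugator_reduceCyclically (rword c)
  have hconj : IsConj (FreeGroup.mk s) c :=
    isConj_iff.2 ⟨FreeGroup.mk q, by
      rw [FreeGroup.inv_mk, FreeGroup.mul_mk, FreeGroup.mul_mk, hqs, mk_rword]⟩
  have hle : (rword c).length ≤ s.length := (hc _ hconj.symm).trans (wlen_mk_le s)
  have hq : q = [] := by
    rw [← List.length_eq_zero_iff]
    rw [← hqs] at hle
    simp only [List.length_append] at hle
    omega
  have hs : s = rword c := by simpa [hq] using hqs
  exact hs ▸ FreeGroup.reduceCyclically.isCyclicallyReduced (isReduced_rword c)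

theorem wlen_eq_cycLen_iff {a h : F n} :
    wlen (h⁻¹ * a * h) = cycLen a ↔ IsShortestConj (h⁻¹ * a * h) := by
  have cycLen_le (g : F n) : cycLen a ≤ wlen (g⁻¹ * a * g) := Nat.sInf_le ⟨g, rfl⟩
  refine ⟨fun heq d hd => ?_, fun hmin => le_antisymm ?_ (cycLen_le h)⟩
  · obtain ⟨g, rfl⟩ := isConj_iff.1 hd
    have := cycLen_le (h * g⁻¹)
    rwa [← heq, show (h * g⁻¹)⁻¹ * a * (h * g⁻¹) = g * (h⁻¹ * a * h) * g⁻¹ by group] at this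
  · obtain ⟨g, hg⟩ : ∃ g, wlen (g⁻¹ * a * g) = cycLen a :=
      Nat.sInf_mem (s := {k | ∃ g : F n, wlen (g⁻¹ * a * g) = k}) ⟨_, 1, rfl⟩
    rw [← hg]
    exact hmin _ (isConj_iff.2 ⟨g⁻¹ * h, by group⟩)

end ConjugacyClasses

section MinimalTree

variable {n : ℕ} {B : Subgroup (F n)} {g h w : F n}

theorem mem_conjSub : h ∈ conjSub g B ↔ g⁻¹ * h * g ∈ B := by
  rw [conjSub, Subgroup.mem_map_equiv, MulAut.conj_symm_apply]

theorem conjSub_one (B : Subgroup (F n)) : conjSub 1 B = B := by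
  ext x
  simp only [mem_conjSub, inv_one, one_mul, mul_one]

theorem conjSub_conjSub (g h : F n) (B : Subgroup (F n)) :
    conjSub g (conjSub h B) = conjSub (g * h) B := by
  ext x
  simp only [mem_conjSub, mul_inv_rev, mul_assoc]

theorem mem_treeVerts_iff :
    h ∈ treeVerts B ↔ ∃ c, c ≠ 1 ∧ IsShortestConj c ∧ h * c * h⁻¹ ∈ B := by
  constructor
  · rintro ⟨a, ha, ha₁, hlen⟩
    refine ⟨h⁻¹ * a * h, ?_, wlen_eq_cycLen_iff.1 hlen, ?_⟩
    · simpa only [inv_inv] using (conj_eq_one_iff (a := h⁻¹)).not.2 ha₁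
    · rwa [show h * (h⁻¹ * a * h) * h⁻¹ = a by group]
  · rintro ⟨c, hc₁, hc, hmem⟩
    refine ⟨h * c * h⁻¹, hmem, conj_eq_one_iff.not.2 hc₁, wlen_eq_cycLen_iff.2 ?_⟩
    rwa [show h⁻¹ * (h * c * h⁻¹) * h = c by group]

theorem mul_mem_treeVerts_iff : g * h ∈ treeVerts B ↔ h ∈ treeVerts (conjSub g⁻¹ B) := by
  simp only [mem_treeVerts_iff, mem_conjSub, mul_inv_rev, inv_inv, mul_assoc]

theorem exists_extensionOf_of_mem_treeVerts (hw : w ∈ treeVerts B) :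
    ∃ x : Letter n, FreeGroup.IsReduced (rword w ++ [x]) ∧ w * letterE x ∈ treeVerts B ∧
      ∃ a ∈ B, ExtensionOf (w * letterE x) a := by
  obtain ⟨c, hc₁, hc, hcB, hr⟩ : ∃ c, c ≠ 1 ∧ IsShortestConj c ∧ w * c * w⁻¹ ∈ B ∧
      FreeGroup.IsReduced (rword w ++ rword c) := by
    obtain ⟨c, hc₁, hc, hcB⟩ := mem_treeVerts_iff.1 hw
    rcases isReduced_append_or_append_invRev (isReduced_rword w) hc.isCyclicallyReduced
      with hr | hr
    · exact ⟨c, hc₁, hc, hcB, hr⟩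
    · refine ⟨c⁻¹, inv_ne_one.2 hc₁, hc.inv, ?_, by rwa [rword_inv]⟩
      rw [← conj_inv]
      exact inv_mem hcB
  obtain ⟨x, t, hx⟩ : ∃ x t, rword c = x :: t :=
    List.exists_cons_of_ne_nil fun h => hc₁ (FreeGroup.toWord_eq_nil_iff.1 h)
  refine ⟨x, hr.infix ⟨[], t, by simp [hx]⟩, ?_, _, pow_mem hcB _,
    extensionOf_conj_pow hc.isCyclicallyReduced hx hr⟩
  refine mem_treeVerts_iff.2 ⟨_, ?_, hc.rotate hx, ?_⟩
  · simpa only [inv_inv] using (conj_eq_one_iff (a := (letterE x)⁻¹)).not.2 hc₁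
  · rwa [show w * letterE x * ((letterE x)⁻¹ * c * letterE x) * (w * letterE x)⁻¹ =
      w * c * w⁻¹ by group]

end MinimalTree

section Windows

variable {n r L k m : ℕ} {A : Fin r → Subgroup (F n)} {B : Subgroup (F n)} {w z : F n}
  {S : Set (F n)} {x : Letter n}

/-- The last `m` edges of the path `γ_w` (all of `γ_w` if `|w| ≤ m`) lie in `S`: the local condition
along `w` that an extension step has to preserve. -/
def TailPathIn (m : ℕ) (w : F n) (S : Set (F n)) : Prop :=
  ∀ p, p <+: rword w → wlen w ≤ p.length + m → FreeGroup.mk p ∈ S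

theorem TailPathIn.mem (h : TailPathIn m w S) : w ∈ S := by
  simpa only [mk_rword] using h (rword w) List.prefix_rfl (Nat.le_add_right _ _)

theorem TailPathIn.mul_letterE (h : TailPathIn m w S) (hx : FreeGroup.IsReduced (rword w ++ [x]))
    (hmem : w * letterE x ∈ S) : TailPathIn m (w * letterE x) S := by
  intro p hp hlen
  rw [rword_mul_letterE hx, List.prefix_concat_iff] at hp
  rcases hp with rfl | hp
  · rwa [← rword_mul_letterE hx, mk_rword]
  · refine h p hp ?_
    rw [wlen, rword_mul_letterE hx, List.length_append] at hlen
    exact (Nat.le_add_right _ _).trans hlen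

theorem pathIn_iff_forall_prefix :
    pathIn w S ↔ ∀ p, p <+: rword w → FreeGroup.mk p ∈ S := by
  refine ⟨fun h p hp => ?_, fun h m _ => h _ (List.take_prefix _ _)⟩
  rw [List.prefix_iff_eq_take.1 hp]
  exact h _ hp.length_le

theorem pathIn_iff_tailPathIn {v : List (Letter n)} (hw : rword w = v ++ rword z) :
    pathIn z (treeVerts (conjSub (FreeGroup.mk v)⁻¹ B)) ↔
      TailPathIn (wlen z) w (treeVerts B) := by
  have mk_append_mem (q : List (Letter n)) : FreeGroup.mk (v ++ q) ∈ treeVerts B ↔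
      FreeGroup.mk q ∈ treeVerts (conjSub (FreeGroup.mk v)⁻¹ B) := by
    rw [← FreeGroup.mul_mk, mul_mem_treeVerts_iff]
  have hlen : wlen w = v.length + wlen z := by rw [wlen, hw, List.length_append, wlen]
  simp only [pathIn_iff_forall_prefix, ← mk_append_mem, TailPathIn, hw, hlen]
  constructor
  · intro h p hp hpl
    obtain ⟨q, rfl⟩ := List.prefix_of_prefix_length_le (List.prefix_append v _) hp (by omega)
    exact h q ((List.prefix_append_right_inj v).1 hp)
  · intro h q hq
    exact h _ ((List.prefix_append_right_inj v).2 hq) (by rw [List.length_append]; omega)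

theorem InSystem.conjSub (hB : InSystem A B) (g : F n) : InSystem A (conjSub g B) := by
  obtain ⟨i, h, rfl⟩ := hB
  exact ⟨i, g * h, conjSub_conjSub g h (A i)⟩

theorem notMem_Ccal_iff (hz : wlen z = L + 2) :
    z ∉ Ccal A L ↔ ∃ B, InSystem A B ∧ pathIn z (treeVerts B) := by
  have one_mem {B : Subgroup (F n)} (h : pathIn z (treeVerts B)) : 1 ∈ treeVerts B :=
    pathIn_iff_forall_prefix.1 h [] List.nil_prefix
  simp only [Ccal, GammaMem, InSystem, Set.mem_ofPred_eq, hz, true_and, not_forall, not_not]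
  constructor
  · rintro ⟨i, B, ⟨hB, -⟩, h⟩
    exact ⟨B, ⟨i, hB⟩, h⟩
  · rintro ⟨B, ⟨i, hB⟩, h⟩
    exact ⟨i, B, ⟨hB, one_mem h⟩, h⟩

theorem notMem_Ccal_iff_of_suffix (hz : wlen z = L + 2) (hzw : rword z <:+ rword w) :
    z ∉ Ccal A L ↔ ∃ B, InSystem A B ∧ TailPathIn (L + 2) w (treeVerts B) := by
  obtain ⟨v, hv⟩ := hzw
  rw [notMem_Ccal_iff hz, ← hz]
  constructor
  · rintro ⟨B, hB, h⟩
    refine ⟨_, hB.conjSub (FreeGroup.mk v), (pathIn_iff_tailPathIn hv.symm).1 ?_⟩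
    rwa [conjSub_conjSub, inv_mul_cancel, conjSub_one]
  · rintro ⟨B, hB, h⟩
    exact ⟨_, hB.conjSub _, (pathIn_iff_tailPathIn hv.symm).2 h⟩

theorem exists_tailPathIn_of_mem_Sk (hk : L + 2 ≤ k) (hw : w ∈ Sk A L k) :
    ∃ B, InSystem A B ∧ TailPathIn (L + 2) w (treeVerts B) := by
  obtain ⟨hwk, hwC⟩ := hw
  set u := (rword w).drop (k - (L + 2))
  have hsuf : u <:+ rword w := List.drop_suffix _ _
  have hu : rword (FreeGroup.mk u : F n) = u := rword_mk ((isReduced_rword w).infix hsuf.isInfix)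
  have hlen : wlen (FreeGroup.mk u : F n) = L + 2 := by
    rw [wlen, hu, List.length_drop, ← wlen, hwk]
    omega
  exact (notMem_Ccal_iff_of_suffix hlen (hu.symm ▸ hsuf)).1
    fun h => hwC ⟨_, h, hu.symm ▸ hsuf.isInfix⟩

theorem mul_letterE_mem_Sk (hw : w ∈ Sk A L k) (hx : FreeGroup.IsReduced (rword w ++ [x]))
    (hB : InSystem A B) (htail : TailPathIn (L + 2) (w * letterE x) (treeVerts B)) :
    w * letterE x ∈ Sk A L (k + 1) := by
  have hwx := rword_mul_letterE hx
  refine ⟨by rw [wlen, hwx, List.length_append, ← wlen, hw.1, List.length_singleton], ?_⟩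
  rintro ⟨z, hz, hinf⟩
  rw [hwx, List.infix_concat_iff, ← hwx] at hinf
  rcases hinf with hsuf | hinf
  · exact (notMem_Ccal_iff_of_suffix hz.1 hsuf).2 ⟨B, hB, htail⟩ hz
  · exact hw.2 ⟨z, hz, hinf⟩

end Windows

theorem statement_13_general {n r L k : ℕ} {A : Fin r → Subgroup (F n)} (hk : L + 2 ≤ k)
    {w : F n} (hw : w ∈ Sk A L k) :
    ∃ (w' : F n) (i : Fin r) (g a : F n),
      w' ∈ Sk A L (k + 1) ∧ a ∈ conjSub g (A i) ∧
      LengthOneExt w w' ∧ ExtensionOf w' a := by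
  obtain ⟨B, hB, htail⟩ := exists_tailPathIn_of_mem_Sk hk hw
  obtain ⟨x, hx, hmem, a, ha, hext⟩ := exists_extensionOf_of_mem_treeVerts htail.mem
  have hwx : w * letterE x ∈ Sk A L (k + 1) :=
    mul_letterE_mem_Sk hw hx hB (htail.mul_letterE hx hmem)
  obtain ⟨i, g, rfl⟩ := hB
  exact ⟨w * letterE x, i, g, a, hwx, ha, ⟨x, rfl, by rw [hwx.1, hw.1]⟩, hext⟩

/-- Every element of S_k with k ≥ L+2 has a length-one extension in S_{k+1} which
extends to an element of a conjugate of some A_i. -/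
theorem statement_13 (n r L : ℕ) (hn : 3 ≤ n) (A : Fin r → Subgroup (F n))
    (hsys : IsSystem A) (hmal : SystemMalnormal A) (hL : 1 ≤ L)
    (hdiam : DiamBound A L) (hbase : ∀ i, (1 : F n) ∈ treeVerts (A i))
    (k : ℕ) (hk : L + 2 ≤ k) (w : F n) (hw : w ∈ Sk A L k) :
    ∃ (w' : F n) (i : Fin r) (g a : F n),
      w' ∈ Sk A L (k + 1) ∧ a ∈ conjSub g (A i) ∧
      LengthOneExt w w' ∧ ExtensionOf w' a := by
  exact statement_13_general hk hw

end RelCurr
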